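/- Let v be a norm on ℝ^n invariant under coordinate permutations with dual norm v*, and let f : P_n → ℝ be a differentiable function that is geodesically convex (t ↦ f(X^{1/2} e^{tS} X^{1/2}) is convex for every X ∈ P_n and Hermitian S). Then for every X ∈ P_n and every Hermitian H with ‖X^{-1/2} H X^{-1/2}‖_v ≤ 1, one has ‖X^{1/2} ∇f(X) X^{1/2}‖_{v*} ≥ −lim_{t→∞} (f(X^{1/2} e^{t X^{-1/2} H X^{-1/2}} X^{1/2}) − f(X))/t, where ∇f(X) is the Hermitian matrix representing the differential of f at X via the trace pairing (weak duality: the minimum dual gradient norm is at least the supremum of the negative recession function over the unit ball). -/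

import Mathlib

noncomputable section
open scoped Classical
open Matrix Filter
open scoped ComplexOrder Topology

/-- `v(λ(H))` for Hermitian `H` (junk value `0` otherwise). -/
def vnorm {n : ℕ} (v : (Fin n → ℝ) → ℝ) (H : Matrix (Fin n) (Fin n) ℂ) : ℝ :=
  if h : H.IsHermitian then v h.eigenvalues else 0

/-- The positive semidefinite square root (junk value `0` off PSD matrices). -/
def matSqrt {n : ℕ} (X : Matrix (Fin n) (Fin n) ℂ) : Matrix (Fin n) (Fin n) ℂ :=
  if h : X.PosSemidef then
    h.1.eigenvectorUnitary.1 * diagonal ((↑) ∘ Real.sqrt ∘ h.1.eigenvalues) *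
      (star h.1.eigenvectorUnitary : Matrix (Fin n) (Fin n) ℂ)
  else 0

/-! Write `R = X ^ (1/2)` and `S = R⁻¹ H R⁻¹`. Since `f` is convex along the geodesic
`R e ^ (t S) R`, its slope at `t = 0`, which is `tr (∇f(X) H) = tr ((R ∇f(X) R) S)`, is at most the
recession value. It remains to bound this trace from below by `-‖R ∇f(X) R‖_{v*}`. In terms of the
eigenvalues `a` of `R ∇f(X) R` and `b` of `S`, the trace is `a ⬝ᵥ D *ᵥ b` with `D` the entrywise
squared modulus of a unitary matrix. Such a `D` is doubly stochastic, so by Birkhoff's theorem it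
does not increase the permutation-invariant norm `v`, and the duality of `v` and `v*` applies to
`a` and `-D *ᵥ b`. -/

section Convexity

lemma convexOn_univ_of_forall_line {𝕜 E β : Type*} [Ring 𝕜] [PartialOrder 𝕜] [AddCommGroup E]
    [Module 𝕜 E] [AddCommMonoid β] [PartialOrder β] [SMul 𝕜 β] {g : E → β}
    (hg : ∀ x y : E, ConvexOn 𝕜 Set.univ fun t : 𝕜 => g (x + t • y)) :
    ConvexOn 𝕜 Set.univ g := by
  refine ⟨convex_univ, fun x _ y _ a b ha hb hab => ?_⟩
  have hpoint : a • x + b • y = x + b • (y - x) := by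
    rw [eq_sub_of_add_eq hab, sub_smul, one_smul, smul_sub]
    abel
  simpa [hpoint] using
    (hg x (y - x)).2 (Set.mem_univ (0 : 𝕜)) (Set.mem_univ (1 : 𝕜)) ha hb hab

lemma le_of_convexOn_of_tendsto_slope_atTop {φ : ℝ → ℝ} {a d L : ℝ}
    (hφ : ConvexOn ℝ (Set.Ici a) φ) (hd : HasDerivWithinAt φ d (Set.Ioi a) a)
    (hL : Tendsto (slope φ a) atTop (𝓝 L)) : d ≤ L :=
  ge_of_tendsto hL <| (eventually_gt_atTop a).mono fun _ ht =>
    hφ.le_slope_of_hasDerivWithinAt_Ioi Set.self_mem_Ici ht.le ht hd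

lemma hasDerivAt_comp_of_tangent_of_lipschitzOnWith {𝕜 E F : Type*} [NontriviallyNormedField 𝕜]
    [NormedAddCommGroup E] [NormedSpace 𝕜 E] [NormedAddCommGroup F] [NormedSpace 𝕜 F]
    {g : E → F} {K : NNReal} {s : Set E} {γ δ : 𝕜 → E} {a : 𝕜} {w : E} {d : F}
    (hg : LipschitzOnWith K g s) (hs : s ∈ 𝓝 (γ a)) (hγδ : γ a = δ a)
    (hγ : HasDerivAt γ w a) (hδ : HasDerivAt δ w a) (hgγ : HasDerivAt (fun t => g (γ t)) d a) :
    HasDerivAt (fun t => g (δ t)) d a := by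
  have hgap : (fun t => g (δ t) - g (γ t)) =O[𝓝 a] fun t => δ t - γ t := by
    refine Asymptotics.IsBigO.of_bound K ?_
    filter_upwards [hγ.continuousAt hs, hδ.continuousAt (hγδ ▸ hs)] with t hγt hδt
    exact hg.norm_sub_le hδt hγt
  have htangent : (fun t => δ t - γ t) =o[𝓝 a] fun t => t - a := by
    simpa [hasDerivAt_iff_isLittleO, hγδ] using hδ.sub hγ
  have hzero : HasDerivAt (fun t => g (δ t) - g (γ t)) 0 a := by
    simpa [hasDerivAt_iff_isLittleO, hγδ] using hgap.trans_isLittleO htangent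
  simpa using hzero.fun_add hgγ

end Convexity

section SpectralDuality

variable {m : Type*} [Fintype m] [DecidableEq m]

lemma map_mulVec_le_of_mem_doublyStochastic {R β : Type*} [Field R] [LinearOrder R]
    [IsStrictOrderedRing R] [AddCommGroup β] [PartialOrder β] [IsOrderedAddMonoid β] [Module R β]
    [IsStrictOrderedModule R β] {φ : (m → R) → β}
    (hφ : ConvexOn R Set.univ φ) (hperm : ∀ (σ : Equiv.Perm m) (x : m → R), φ (x ∘ σ) = φ x)
    {D : Matrix m m R} (hD : D ∈ doublyStochastic R m) (x : m → R) : φ (D *ᵥ x) ≤ φ x := by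
  obtain ⟨w, hw_nonneg, hw_sum, rfl⟩ := exists_eq_sum_perm_of_mem_doublyStochastic hD
  calc φ ((∑ σ, w σ • σ.permMatrix R) *ᵥ x)
      = φ (∑ σ : Equiv.Perm m, w σ • (x ∘ σ)) := by
        simp only [sum_mulVec, smul_mulVec, permMatrix_mulVec]
    _ ≤ ∑ σ : Equiv.Perm m, w σ • φ (x ∘ σ) :=
        hφ.map_sum_le (fun σ _ => hw_nonneg σ) hw_sum fun _ _ => Set.mem_univ _
    _ = φ x := by simp only [hperm, ← Finset.sum_smul, hw_sum, one_smul]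

variable {𝕜 : Type*} [RCLike 𝕜]

lemma map_norm_sq_mem_doublyStochastic {U : Matrix m m 𝕜} (hU : U ∈ unitaryGroup m 𝕜) :
    (U.map fun z => ‖z‖ ^ 2) ∈ doublyStochastic ℝ m := by
  rw [mem_doublyStochastic_iff_sum]
  refine ⟨fun i j => sq_nonneg _, fun i => ?_, fun j => ?_⟩
  · have hrow := congr_fun₂ (mem_unitaryGroup_iff.mp hU) i i
    simp only [mul_apply, star_apply, RCLike.star_def, RCLike.mul_conj, one_apply_eq] at hrow
    exact_mod_cast hrow
  · have hcol := congr_fun₂ (mem_unitaryGroup_iff'.mp hU) j j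
    simp only [mul_apply, star_apply, RCLike.star_def, RCLike.conj_mul, one_apply_eq] at hcol
    exact_mod_cast hcol

/-- The diagonal matrix with prescribed real entries, bundled as an algebra homomorphism so that
it transports sums, products and exponentials of vectors. -/
def diagonalOfReal (𝕜 : Type*) [RCLike 𝕜] : (m → ℝ) →ₐ[ℝ] Matrix m m 𝕜 :=
  (diagonalAlgHom ℝ).comp (RCLike.ofRealAm.compLeft m)

lemma diagonalOfReal_apply (x : m → ℝ) :
    diagonalOfReal 𝕜 x = diagonal fun i => (x i : 𝕜) := rfl

lemma isHermitian_diagonalOfReal (x : m → ℝ) : (diagonalOfReal 𝕜 x).IsHermitian :=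
  isHermitian_diagonal_of_self_adjoint _ <| by
    ext i
    simp

lemma exists_unitary_eq_conj_diagonalOfReal {A : Matrix m m 𝕜} (hA : A.IsHermitian) :
    ∃ U ∈ unitaryGroup m 𝕜, A = U * diagonalOfReal 𝕜 hA.eigenvalues * Uᴴ :=
  ⟨_, hA.eigenvectorUnitary.2, hA.spectral_theorem⟩

lemma trace_diagonalOfReal_mul_conj (a b : m → ℝ) (W : Matrix m m 𝕜) :
    trace (diagonalOfReal 𝕜 a * (W * diagonalOfReal 𝕜 b * Wᴴ)) =
      ((a ⬝ᵥ (W.map fun z => ‖z‖ ^ 2) *ᵥ b : ℝ) : 𝕜) := by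
  simp only [diagonalOfReal_apply, trace, diag_apply, diagonal_mul, mul_apply (M := W * _),
    mul_diagonal, conjTranspose_apply, dotProduct, mulVec, map_apply, RCLike.ofReal_sum,
    RCLike.ofReal_mul, RCLike.ofReal_pow, ← RCLike.mul_conj, RCLike.star_def, mul_right_comm]

lemma exists_doublyStochastic_trace_mul_eq {A B : Matrix m m 𝕜} (hA : A.IsHermitian)
    (hB : B.IsHermitian) :
    ∃ D ∈ doublyStochastic ℝ m,
      trace (A * B) = ((hA.eigenvalues ⬝ᵥ D *ᵥ hB.eigenvalues : ℝ) : 𝕜) := by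
  obtain ⟨U, hU, hA_eq⟩ := exists_unitary_eq_conj_diagonalOfReal hA
  obtain ⟨V, hV, hB_eq⟩ := exists_unitary_eq_conj_diagonalOfReal hB
  have hW : Uᴴ * V ∈ unitaryGroup m 𝕜 := mul_mem (Unitary.star_mem hU) hV
  refine ⟨_, map_norm_sq_mem_doublyStochastic hW, ?_⟩
  rw [← trace_diagonalOfReal_mul_conj, conjTranspose_mul, conjTranspose_conjTranspose]
  conv_lhs => rw [hA_eq, hB_eq, mul_assoc U, mul_assoc U, trace_mul_comm U]
  simp only [mul_assoc]

lemma abs_re_trace_mul_le {v : Seminorm ℝ (m → ℝ)}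
    (hperm : ∀ (σ : Equiv.Perm m) (x : m → ℝ), v (x ∘ σ) = v x)
    {A B : Matrix m m 𝕜} (hA : A.IsHermitian) (hB : B.IsHermitian) (hBv : v hB.eigenvalues ≤ 1)
    {c : ℝ} (hc : ∀ y, v y ≤ 1 → hA.eigenvalues ⬝ᵥ y ≤ c) :
    |RCLike.re (trace (A * B))| ≤ c := by
  obtain ⟨D, hD, htrace⟩ := exists_doublyStochastic_trace_mul_eq hA hB
  have hDv : v (D *ᵥ hB.eigenvalues) ≤ 1 :=
    (map_mulVec_le_of_mem_doublyStochastic v.convexOn hperm hD _).trans hBv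
  rw [htrace, RCLike.ofReal_re, abs_le']
  refine ⟨hc _ hDv, ?_⟩
  rw [← dotProduct_neg]
  exact hc _ (by rwa [map_neg_eq_map])

end SpectralDuality

section GeodesicConvexity

variable {m : Type*} [Fintype m] [DecidableEq m]

lemma exists_unitary_mul_eq_of_mul_conjTranspose_eq {α : Type*} [CommRing α] [StarRing α]
    {R T : Matrix m m α} (hR : IsUnit R) (h : T * Tᴴ = R * Rᴴ) :
    ∃ V ∈ unitaryGroup m α, R * V = T := by
  have hdet : IsUnit R.det := R.isUnit_iff_isUnit_det.mp hR
  refine ⟨R⁻¹ * T, mem_unitaryGroup_iff.mpr ?_, mul_nonsing_inv_cancel_left R T hdet⟩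
  calc R⁻¹ * T * (R⁻¹ * T)ᴴ
      = R⁻¹ * (T * Tᴴ) * (R⁻¹)ᴴ := by simp only [conjTranspose_mul, mul_assoc]
    _ = 1 := by
        rw [h, nonsing_inv_mul_cancel_left R _ hdet, ← conjTranspose_mul,
          nonsing_inv_mul R hdet, conjTranspose_one]

variable {𝕜 : Type*} [RCLike 𝕜]

lemma exp_unitary_conj {U : Matrix m m 𝕜} (hU : U ∈ unitaryGroup m 𝕜) (A : Matrix m m 𝕜) :
    NormedSpace.exp (U * A * Uᴴ) = U * NormedSpace.exp A * Uᴴ := by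
  have hinv : U⁻¹ = Uᴴ := inv_eq_right_inv (mem_unitaryGroup_iff.mp hU)
  rw [← hinv]
  exact exp_conj U A (Unitary.isUnit_coe (U := ⟨U, hU⟩))

lemma diagonalOfReal_exp (x : m → ℝ) :
    diagonalOfReal 𝕜 (fun i => Real.exp (x i)) = NormedSpace.exp (diagonalOfReal 𝕜 x) := by
  rw [diagonalOfReal_apply, diagonalOfReal_apply, exp_diagonal]
  congr 1
  ext i
  rw [Pi.coe_exp, Real.exp_eq_exp_ℝ]
  exact NormedSpace.map_exp RCLike.ofRealAm RCLike.continuous_ofReal (x i)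

lemma exp_diagonalOfReal_add (x y : m → ℝ) :
    NormedSpace.exp (diagonalOfReal 𝕜 (x + y)) =
      NormedSpace.exp (diagonalOfReal 𝕜 x) * NormedSpace.exp (diagonalOfReal 𝕜 y) := by
  simp only [← diagonalOfReal_exp, ← map_mul, Pi.add_apply, Real.exp_add]
  rfl

/-- Convexity along the geodesics of the cone of positive definite matrices. A geodesic through
`X` is parametrized from an arbitrary factorization `X = T * Tᴴ` instead of `X ^ (1/2)`, which
makes invariance under congruences immediate. -/
def GeodesicallyConvex (f : Matrix m m 𝕜 → ℝ) : Prop :=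
  ∀ T : Matrix m m 𝕜, IsUnit T → ∀ S : Matrix m m 𝕜, S.IsHermitian →
    ConvexOn ℝ Set.univ fun t : ℝ => f (T * NormedSpace.exp (t • S) * Tᴴ)

namespace GeodesicallyConvex

variable {f : Matrix m m 𝕜 → ℝ}

lemma comp_congruence (hf : GeodesicallyConvex f) {P : Matrix m m 𝕜} (hP : IsUnit P) :
    GeodesicallyConvex fun Y => f (P * Y * Pᴴ) := fun T hT S hS => by
  simpa only [conjTranspose_mul, mul_assoc] using hf (P * T) (hP.mul hT) S hS

lemma convexOn_exp_smul (hf : GeodesicallyConvex f) {S : Matrix m m 𝕜} (hS : S.IsHermitian) :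
    ConvexOn ℝ Set.univ fun t : ℝ => f (NormedSpace.exp (t • S)) := by
  simpa only [one_mul, mul_one, conjTranspose_one] using hf 1 isUnit_one S hS

lemma convexOn_exp_diagonalOfReal (hf : GeodesicallyConvex f) :
    ConvexOn ℝ Set.univ fun x : m → ℝ => f (NormedSpace.exp (diagonalOfReal 𝕜 x)) := by
  refine convexOn_univ_of_forall_line fun x y => ?_
  have hline : ∀ t : ℝ, NormedSpace.exp (diagonalOfReal 𝕜 (x + t • y)) =
      NormedSpace.exp (diagonalOfReal 𝕜 ((1 / 2 : ℝ) • x)) *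
        NormedSpace.exp (t • diagonalOfReal 𝕜 y) *
        (NormedSpace.exp (diagonalOfReal 𝕜 ((1 / 2 : ℝ) • x)))ᴴ := by
    intro t
    have hsplit : x + t • y = (1 / 2 : ℝ) • x + t • y + (1 / 2 : ℝ) • x := by module
    rw [(isHermitian_diagonalOfReal _).exp.eq, hsplit, exp_diagonalOfReal_add,
      exp_diagonalOfReal_add, map_smul _ t]
  simpa only [hline] using hf _ (isUnit_exp _) _ (isHermitian_diagonalOfReal y)

-- Only a derivative along a line is given, so no chain rule yields one along the geodesic.
-- On the flat of diagonal matrices `f ∘ exp` is convex, hence locally Lipschitz, so the geodesic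
-- `t • l` can be exchanged for the tangent curve `log (1 + t • l)`, whose exponential is a line.
lemma hasDerivAt_exp_diagonalOfReal (hf : GeodesicallyConvex f) {l : m → ℝ} {d : ℝ}
    (hd : HasDerivAt (fun t : ℝ => f (1 + t • diagonalOfReal 𝕜 l)) d 0) :
    HasDerivAt (fun t : ℝ => f (NormedSpace.exp (t • diagonalOfReal 𝕜 l))) d 0 := by
  obtain ⟨K, s, hs, hK⟩ := hf.convexOn_exp_diagonalOfReal.locallyLipschitz (0 : m → ℝ)
  have hline : HasDerivAt (fun t : ℝ => t • l) l 0 := by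
    simpa using (hasDerivAt_id (0 : ℝ)).smul_const l
  have hlog : HasDerivAt (fun (t : ℝ) i => Real.log (1 + t * l i)) l 0 := by
    refine hasDerivAt_pi.mpr fun i => ?_
    simpa using (((hasDerivAt_id (0 : ℝ)).mul_const (l i)).const_add 1).log (by simp)
  have hpos : ∀ᶠ t in 𝓝 (0 : ℝ), ∀ i, 0 < 1 + t * l i :=
    eventually_all.mpr fun i =>
      (by fun_prop : ContinuousAt (fun t : ℝ => 1 + t * l i) 0).eventually_const_lt (by simp)
  have hexp_log : ∀ᶠ t in 𝓝 (0 : ℝ),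
      NormedSpace.exp (diagonalOfReal 𝕜 fun i => Real.log (1 + t * l i)) =
        1 + t • diagonalOfReal 𝕜 l := by
    filter_upwards [hpos] with t ht
    rw [← diagonalOfReal_exp, ← map_smul, ← map_one (diagonalOfReal 𝕜), ← map_add]
    congr 1
    ext i
    exact Real.exp_log (ht i)
  have hdlog := hd.congr_of_eventuallyEq (hexp_log.mono fun t ht => congrArg f ht)
  have h0 : (fun i => Real.log (1 + (0 : ℝ) * l i)) = 0 := by
    ext i
    simp
  simpa only [map_smul] using
    hasDerivAt_comp_of_tangent_of_lipschitzOnWith hK (h0 ▸ hs)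
      (by simp only [h0, zero_smul]) hlog hline hdlog

lemma hasDerivAt_exp_smul (hf : GeodesicallyConvex f) {S : Matrix m m 𝕜} (hS : S.IsHermitian)
    {d : ℝ} (hd : HasDerivAt (fun t : ℝ => f (1 + t • S)) d 0) :
    HasDerivAt (fun t : ℝ => f (NormedSpace.exp (t • S))) d 0 := by
  obtain ⟨U, hU, hS_eq⟩ := exists_unitary_eq_conj_diagonalOfReal hS
  have hUU : U * Uᴴ = 1 := mem_unitaryGroup_iff.mp hU
  set D := diagonalOfReal 𝕜 hS.eigenvalues
  have hsmul (t : ℝ) : t • S = U * (t • D) * Uᴴ := by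
    rw [hS_eq, Matrix.mul_smul, Matrix.smul_mul]
  have hline (t : ℝ) : 1 + t • S = U * (1 + t • D) * Uᴴ := by
    rw [hsmul, mul_add, add_mul, mul_one, hUU]
  simp only [hline] at hd
  simp only [hsmul, exp_unitary_conj hU]
  exact (hf.comp_congruence (Unitary.isUnit_coe (U := ⟨U, hU⟩))).hasDerivAt_exp_diagonalOfReal hd

lemma le_recession_of_hasDerivAt (hf : GeodesicallyConvex f) {S : Matrix m m 𝕜} (hS : S.IsHermitian)
    {d L : ℝ} (hd : HasDerivAt (fun t : ℝ => f (1 + t • S)) d 0)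
    (hL : Tendsto (fun t : ℝ => (f (NormedSpace.exp (t • S)) - f 1) / t) atTop (𝓝 L)) :
    d ≤ L := by
  refine le_of_convexOn_of_tendsto_slope_atTop
    ((hf.convexOn_exp_smul hS).subset (Set.subset_univ _) (convex_Ici 0))
    (hf.hasDerivAt_exp_smul hS hd).hasDerivWithinAt (hL.congr fun t => ?_)
  simp [slope_def_field]

end GeodesicallyConvex

theorem weak_duality_gradient_norm_general {v : Seminorm ℝ (m → ℝ)} {vs : (m → ℝ) → ℝ}
    (hv_perm : ∀ (σ : Equiv.Perm m) (x : m → ℝ), v (x ∘ σ) = v x)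
    (hvs : ∀ x y, v y ≤ 1 → x ⬝ᵥ y ≤ vs x)
    {f : Matrix m m 𝕜 → ℝ} (hf : GeodesicallyConvex f) {X R G H : Matrix m m 𝕜}
    (hR : R.IsHermitian) (hR_unit : IsUnit R) (hRR : R * R = X)
    (hG : (R * G * R).IsHermitian) (hH : (R⁻¹ * H * R⁻¹).IsHermitian)
    (hderiv : HasDerivAt (fun t : ℝ => f (X + t • H)) (RCLike.re (trace (G * H))) 0)
    (hball : v hH.eigenvalues ≤ 1) {L : ℝ}
    (hL : Tendsto
      (fun t : ℝ => (f (R * NormedSpace.exp (t • (R⁻¹ * H * R⁻¹)) * R) - f X) / t)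
      atTop (𝓝 L)) :
    -L ≤ vs hG.eigenvalues := by
  have hdet : IsUnit R.det := R.isUnit_iff_isUnit_det.mp hR_unit
  set S := R⁻¹ * H * R⁻¹ with hS_def
  have hH_eq : R * S * R = H := by
    rw [hS_def, mul_assoc R⁻¹, mul_nonsing_inv_cancel_left R _ hdet,
      nonsing_inv_mul_cancel_right R _ hdet]
  have hline (t : ℝ) : X + t • H = R * (1 + t • S) * R := by
    rw [mul_add, add_mul, mul_one, hRR, Matrix.mul_smul, Matrix.smul_mul, hH_eq]
  have htrace : trace (R * G * R * S) = trace (G * H) := by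
    rw [← hH_eq, mul_assoc R, mul_assoc R, trace_mul_comm R]
    simp only [mul_assoc]
  have hrec : RCLike.re (trace (G * H)) ≤ L := by
    refine (hf.comp_congruence hR_unit).le_recession_of_hasDerivAt hH ?_ ?_
    · simpa only [hR.eq, ← hline] using hderiv
    · simpa only [hR.eq, mul_one, hRR] using hL
  have hdual : |RCLike.re (trace (G * H))| ≤ vs hG.eigenvalues :=
    htrace ▸ abs_re_trace_mul_le hv_perm hG hH hball (hvs _)
  linarith [neg_abs_le (RCLike.re (trace (G * H)))]

end GeodesicConvexity

section MatSqrt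

variable {n : ℕ} {X : Matrix (Fin n) (Fin n) ℂ}

lemma matSqrt_eq_conj_diagonalOfReal (hX : X.PosSemidef) :
    matSqrt X = hX.1.eigenvectorUnitary.1 *
      diagonalOfReal ℂ (fun i => √(hX.1.eigenvalues i)) * hX.1.eigenvectorUnitary.1ᴴ :=
  dif_pos hX

lemma isHermitian_matSqrt (hX : X.PosSemidef) : (matSqrt X).IsHermitian := by
  rw [matSqrt_eq_conj_diagonalOfReal hX]
  exact isHermitian_mul_mul_conjTranspose _ (isHermitian_diagonalOfReal _)

lemma matSqrt_mul_self (hX : X.PosSemidef) : matSqrt X * matSqrt X = X := by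
  set U := hX.1.eigenvectorUnitary.1
  set D := diagonalOfReal ℂ fun i => √(hX.1.eigenvalues i)
  have hU : Uᴴ * U = 1 := mem_unitaryGroup_iff'.mp hX.1.eigenvectorUnitary.2
  have hD : D * D = diagonalOfReal ℂ hX.1.eigenvalues := by
    rw [← map_mul]
    exact congrArg _ (funext fun i => Real.mul_self_sqrt (hX.eigenvalues_nonneg i))
  calc matSqrt X * matSqrt X
      = U * (D * (Uᴴ * U) * D) * Uᴴ := by
        rw [matSqrt_eq_conj_diagonalOfReal hX]
        simp only [U, D, mul_assoc]
    _ = U * diagonalOfReal ℂ hX.1.eigenvalues * Uᴴ := by rw [hU, mul_one, hD]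
    _ = X := hX.1.spectral_theorem.symm

lemma isUnit_matSqrt (hX : X.PosDef) : IsUnit (matSqrt X) := by
  rw [← isUnit_mul_self_iff, matSqrt_mul_self hX.posSemidef]
  exact hX.isUnit

lemma geodesicallyConvex_of_matSqrt {f : Matrix (Fin n) (Fin n) ℂ → ℝ}
    (hf : ∀ X : Matrix (Fin n) (Fin n) ℂ, X.PosDef →
      ∀ S : Matrix (Fin n) (Fin n) ℂ, S.IsHermitian →
        ConvexOn ℝ Set.univ fun t : ℝ => f (matSqrt X * NormedSpace.exp (t • S) * matSqrt X)) :
    GeodesicallyConvex f := by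
  intro T hT S hS
  have hX : (T * Tᴴ).PosDef := PosDef.mul_conjTranspose_self T (vecMul_injective_iff_isUnit.mpr hT)
  have hconv := hf _ hX
  have hR := isHermitian_matSqrt hX.posSemidef
  have hRR := matSqrt_mul_self hX.posSemidef
  have hR_unit := isUnit_matSqrt hX
  set R := matSqrt (T * Tᴴ)
  obtain ⟨V, hV, hT_eq⟩ : ∃ V ∈ unitaryGroup (Fin n) ℂ, R * V = T :=
    exists_unitary_mul_eq_of_mul_conjTranspose_eq hR_unit (by rw [hR.eq, hRR])
  have hcurve (t : ℝ) : T * NormedSpace.exp (t • S) * Tᴴ =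
      R * NormedSpace.exp (t • (V * S * Vᴴ)) * R := by
    rw [← Matrix.smul_mul, ← Matrix.mul_smul, exp_unitary_conj hV, ← hT_eq]
    simp only [conjTranspose_mul, hR.eq, mul_assoc]
  simpa only [hcurve] using hconv _ (isHermitian_mul_mul_conjTranspose V hS)

end MatSqrt

/-- Weak duality: for every `X ∈ P_n` and Hermitian `H` with `‖X^{-1/2} H X^{-1/2}‖_v ≤ 1`,
the dual gradient norm `‖X^{1/2} ∇f(X) X^{1/2}‖_{v*}` is at least the negative of the
recession value of `f` along the geodesic ray `t ↦ X^{1/2} e^{t X^{-1/2} H X^{-1/2}} X^{1/2}`. -/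
theorem weak_duality_gradient_norm {n : ℕ} (v vs : (Fin n → ℝ) → ℝ)
    (hv_eq0 : ∀ x, v x = 0 ↔ x = 0)
    (hv_smul : ∀ (c : ℝ) (x : Fin n → ℝ), v (c • x) = |c| * v x)
    (hv_add : ∀ x y, v (x + y) ≤ v x + v y)
    (hv_perm : ∀ (σ : Equiv.Perm (Fin n)) (x : Fin n → ℝ), v (x ∘ σ) = v x)
    (hvs : ∀ x, IsGreatest {r : ℝ | ∃ y : Fin n → ℝ, v y ≤ 1 ∧ r = ∑ i, x i * y i} (vs x))
    (f : Matrix (Fin n) (Fin n) ℂ → ℝ)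
    (hconv : ∀ X : Matrix (Fin n) (Fin n) ℂ, X.PosDef →
      ∀ S : Matrix (Fin n) (Fin n) ℂ, S.IsHermitian →
        ConvexOn ℝ Set.univ (fun t : ℝ => f (matSqrt X * NormedSpace.exp (t • S) * matSqrt X)))
    (Gf : Matrix (Fin n) (Fin n) ℂ → Matrix (Fin n) (Fin n) ℂ)
    (hGf_herm : ∀ X : Matrix (Fin n) (Fin n) ℂ, X.PosDef → (Gf X).IsHermitian)
    (hGf : ∀ X : Matrix (Fin n) (Fin n) ℂ, X.PosDef →
      ∀ H : Matrix (Fin n) (Fin n) ℂ, H.IsHermitian →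
        HasDerivAt (fun t : ℝ => f (X + t • H)) ((Matrix.trace (Gf X * H)).re) 0)
    (X H : Matrix (Fin n) (Fin n) ℂ) (hX : X.PosDef) (hH : H.IsHermitian)
    (hHball : vnorm v ((matSqrt X)⁻¹ * H * (matSqrt X)⁻¹) ≤ 1)
    (L : ℝ)
    (hL : Tendsto
      (fun t : ℝ =>
        (f (matSqrt X * NormedSpace.exp (t • ((matSqrt X)⁻¹ * H * (matSqrt X)⁻¹)) * matSqrt X)
          - f X) / t)
      atTop (𝓝 L)) :
    -L ≤ vnorm vs (matSqrt X * Gf X * matSqrt X) := by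
  have hR := isHermitian_matSqrt hX.posSemidef
  have hG : (matSqrt X * Gf X * matSqrt X).IsHermitian := by
    simpa only [hR.eq] using isHermitian_mul_mul_conjTranspose (matSqrt X) (hGf_herm X hX)
  have hS : ((matSqrt X)⁻¹ * H * (matSqrt X)⁻¹).IsHermitian := by
    simpa only [hR.inv.eq] using isHermitian_mul_mul_conjTranspose (matSqrt X)⁻¹ hH
  rw [vnorm, dif_pos hS] at hHball
  rw [vnorm, dif_pos hG]
  exact weak_duality_gradient_norm_general (v := Seminorm.of v hv_add hv_smul) hv_perm
    (fun x y hy => (hvs x).2 ⟨y, hy, rfl⟩) (geodesicallyConvex_of_matSqrt hconv) hR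
    (isUnit_matSqrt hX) (matSqrt_mul_self hX.posSemidef) hG hS (hGf X hX H hH) hHball hL
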